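/- arXiv:2012.01618 — 2 statements merged into one kernel-verified Lean document; each statement's English description precedes it below -/
import Mathlib

section
/- Per-update descent bound for the A-step: along the VISTA iterates, for every k ≥ 1 and every t ∈ {1,…,T}, the decrease of the objective from updating A_t alone satisfies Δ^A_{k,t} := F(A_{1:t−1}^{(k+1)}, A_{t:T}^{(k)}, B_{1:T}^{(k)}) − F(A_{1:t}^{(k+1)}, A_{t+1:T}^{(k)}, B_{1:T}^{(k)}) ≥ ((1 + λ2(1{t>1} + 1{t<T}) + λ3)/2)·‖(A_t^{(k)} − A_t^{(k+1)})(B_t^{(k)})ᵀ‖_F² + (λ1/2)·‖A_t^{(k)} − A_t^{(k+1)}‖_F². -/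
/-!
The surrogate `Q̃_{A,t}` is a quadratic function of `A` whose leading form is the right-hand side
`q(D) = ((1 + λ₂(1{t>1} + 1{t<T}) + λ₃)/2)‖D Bᵀ‖² + (λ₁/2)‖D‖²` of the bound. Comparing the minimal
value `Q̃(A')` with `Q̃((1 - s) A' + s A) = (1 - s) Q̃(A') + s Q̃(A) - s (1 - s) q(A - A')`
(`QtilA_segment`), dividing by `s` and letting `s → 0` gives `q(A - A') ≤ Q̃(A) - Q̃(A')`.

The surrogate majorizes the part of the objective depending on `A_t`: filling in the unobserved
entries with `A_t^{(k)} (B_t^{(k)})ᵀ` can only increase the loss and leaves it unchanged at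
`A_t^{(k)}`. Hence the objective decreases at least as much as the surrogate
(`QtilA_diff_le_objF_diff`).
-/

open Matrix BigOperators Finset Filter Topology

/-- Squared Frobenius norm of a real matrix. -/
noncomputable def frobSq {a b : ℕ} (M : Matrix (Fin a) (Fin b) ℝ) : ℝ :=
  ∑ i, ∑ j, (M i j) ^ 2

/-- Projection onto the observed entries `Ω`. -/
noncomputable def proj {a b : ℕ} (Ω : Finset (Fin a × Fin b))
    (M : Matrix (Fin a) (Fin b) ℝ) : Matrix (Fin a) (Fin b) ℝ :=
  fun i j => if (i, j) ∈ Ω then M i j else 0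

/-- Projection onto the complement of `Ω`. -/
noncomputable def projPerp {a b : ℕ} (Ω : Finset (Fin a × Fin b))
    (M : Matrix (Fin a) (Fin b) ℝ) : Matrix (Fin a) (Fin b) ℝ :=
  M - proj Ω M
/-- The VISTA objective `F(A_{1:T}, B_{1:T})`; time indices run over `t = 1,…,T`. -/
noncomputable def objF {m n r : ℕ} (T : ℕ) (l1 l2 l3 : ℝ)
    (Ωs : ℕ → Finset (Fin m × Fin n))
    (Xs Ys : ℕ → Matrix (Fin m) (Fin n) ℝ)
    (A : ℕ → Matrix (Fin m) (Fin r) ℝ)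
    (B : ℕ → Matrix (Fin n) (Fin r) ℝ) : ℝ :=
  (1 / 2) * ∑ t ∈ Finset.Icc 1 T, frobSq (proj (Ωs t) (Xs t - A t * (B t)ᵀ))
    + (l1 / 2) * ∑ t ∈ Finset.Icc 1 T, (frobSq (A t) + frobSq (B t))
    + (l2 / 2) * ∑ t ∈ Finset.Icc 2 T,
        frobSq (A t * (B t)ᵀ - A (t - 1) * (B (t - 1))ᵀ)
    + (l3 / 2) * ∑ t ∈ Finset.Icc 1 T, frobSq (Ys t - A t * (B t)ᵀ)
/-- The surrogate `Q̃_{A,t}(A)`.  Here `Akt, Bkt` are the current factors at time `t`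
(used to form the filled-in matrix `X_t^{(k)} = P_{Ω_t}(X_t) + P_{Ω_t^⊥}(A_t^{(k)}(B_t^{(k)})ᵀ)`),
and `prevM, nextM` are the neighbouring imputations
`A_{t−1}^{(k+1)}(B_{t−1}^{(k)})ᵀ` and `A_{t+1}^{(k)}(B_{t+1}^{(k)})ᵀ`. -/
noncomputable def QtilA {m n r : ℕ} (T : ℕ) (l1 l2 l3 : ℝ)
    (Ωt : Finset (Fin m × Fin n)) (Xt Yt : Matrix (Fin m) (Fin n) ℝ)
    (Akt : Matrix (Fin m) (Fin r) ℝ) (Bkt : Matrix (Fin n) (Fin r) ℝ)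
    (prevM nextM : Matrix (Fin m) (Fin n) ℝ) (t : ℕ)
    (A : Matrix (Fin m) (Fin r) ℝ) : ℝ :=
  (1 / 2) * frobSq (proj Ωt Xt + projPerp Ωt (Akt * Bktᵀ) - A * Bktᵀ)
    + (l1 / 2) * frobSq A
    + (l3 / 2) * frobSq (Yt - A * Bktᵀ)
    + (l2 / 2) * (if 1 < t then frobSq (A * Bktᵀ - prevM) else 0)
    + (l2 / 2) * (if t < T then frobSq (nextM - A * Bktᵀ) else 0)

/-- Along a segment, `‖·‖_F²` falls short of its chord by exactly `s (1 - s)` times the squared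
length of the segment. -/
lemma frobSq_segment {a b : ℕ} (P R N : Matrix (Fin a) (Fin b) ℝ) (s : ℝ)
    (hN : N = (1 - s) • P + s • R) :
    frobSq N = (1 - s) * frobSq P + s * frobSq R - s * (1 - s) * frobSq (P - R) := by
  subst hN
  unfold frobSq
  simp only [Finset.mul_sum, ← Finset.sum_add_distrib, ← Finset.sum_sub_distrib]
  refine Finset.sum_congr rfl fun i _ => Finset.sum_congr rfl fun j _ => ?_
  simp only [Matrix.add_apply, Matrix.sub_apply, Matrix.smul_apply, smul_eq_mul]
  ring

lemma frobSq_sub_comm {a b : ℕ} (P R : Matrix (Fin a) (Fin b) ℝ) :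
    frobSq (P - R) = frobSq (R - P) := by
  unfold frobSq
  refine Finset.sum_congr rfl fun i _ => Finset.sum_congr rfl fun j _ => ?_
  simp only [Matrix.sub_apply]
  ring

/-- Replacing the unobserved entries of `X` by those of a guess `Z` majorizes the observed loss. -/
lemma frobSq_proj_le {a b : ℕ} (Ω : Finset (Fin a × Fin b)) (X Z M : Matrix (Fin a) (Fin b) ℝ) :
    frobSq (proj Ω (X - M)) ≤ frobSq (proj Ω X + projPerp Ω Z - M) := by
  unfold frobSq
  refine Finset.sum_le_sum fun i _ => Finset.sum_le_sum fun j _ => ?_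
  simp only [Matrix.add_apply, Matrix.sub_apply, proj, projPerp]
  split_ifs
  · simp
  · simpa using sq_nonneg (Z i j - M i j)

/-- The majorization `frobSq_proj_le` is tight at the guess itself. -/
lemma frobSq_proj_self {a b : ℕ} (Ω : Finset (Fin a × Fin b)) (X Z : Matrix (Fin a) (Fin b) ℝ) :
    frobSq (proj Ω X + projPerp Ω Z - Z) = frobSq (proj Ω (X - Z)) := by
  unfold frobSq
  refine Finset.sum_congr rfl fun i _ => Finset.sum_congr rfl fun j _ => ?_
  simp only [Matrix.add_apply, Matrix.sub_apply, proj, projPerp]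
  split_ifs <;> simp

lemma le_of_forall_one_sub_mul_le {q d : ℝ}
    (h : ∀ s : ℝ, 0 < s → s ≤ 1 → (1 - s) * q ≤ d) : q ≤ d := by
  by_contra! hlt
  have hd : 0 ≤ d := by simpa using h 1 one_pos le_rfl
  have hq : 0 < q := hd.trans_lt hlt
  -- This `s` makes `(1 - s) * q` the midpoint of `d` and `q`.
  have h1 := h ((q - d) / (2 * q)) (by apply div_pos <;> linarith)
    (by rw [div_le_one (by linarith)]; linarith)
  have h2 : (1 - (q - d) / (2 * q)) * q = (q + d) / 2 := by
    field_simp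
    ring
  linarith

/-- The surrogate is a quadratic with leading form `((1 + λ₂(…) + λ₃)/2)‖D Bᵀ‖² + (λ₁/2)‖D‖²`,
so it falls short of its chord between `A` and `A'` by `s (1 - s)` times that form. -/
lemma QtilA_segment {m n r : ℕ} (T : ℕ) (l1 l2 l3 : ℝ)
    (Ωt : Finset (Fin m × Fin n)) (Xt Yt : Matrix (Fin m) (Fin n) ℝ)
    (Akt : Matrix (Fin m) (Fin r) ℝ) (Bkt : Matrix (Fin n) (Fin r) ℝ)
    (prevM nextM : Matrix (Fin m) (Fin n) ℝ) (t : ℕ)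
    (A A' : Matrix (Fin m) (Fin r) ℝ) (s : ℝ) :
    QtilA T l1 l2 l3 Ωt Xt Yt Akt Bkt prevM nextM t ((1 - s) • A' + s • A)
      = (1 - s) * QtilA T l1 l2 l3 Ωt Xt Yt Akt Bkt prevM nextM t A'
        + s * QtilA T l1 l2 l3 Ωt Xt Yt Akt Bkt prevM nextM t A
        - s * (1 - s) *
          (((1 + l2 * ((if 1 < t then (1 : ℝ) else 0) + (if t < T then (1 : ℝ) else 0)) + l3) / 2)
            * frobSq ((A - A') * Bktᵀ) + (l1 / 2) * frobSq (A - A')) := by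
  have hmul : ((1 - s) • A' + s • A) * Bktᵀ = (1 - s) • (A' * Bktᵀ) + s • (A * Bktᵀ) := by
    rw [Matrix.add_mul, Matrix.smul_mul, Matrix.smul_mul]
  have key : ∀ C : Matrix (Fin m) (Fin n) ℝ,
      frobSq (C - ((1 - s) • A' + s • A) * Bktᵀ)
        = (1 - s) * frobSq (C - A' * Bktᵀ) + s * frobSq (C - A * Bktᵀ)
          - s * (1 - s) * frobSq ((A - A') * Bktᵀ) := by
    intro C
    have hd : (A - A') * Bktᵀ = (C - A' * Bktᵀ) - (C - A * Bktᵀ) := by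
      rw [Matrix.sub_mul]
      abel
    rw [hd]
    apply frobSq_segment
    rw [hmul]
    module
  have keyA : frobSq ((1 - s) • A' + s • A)
      = (1 - s) * frobSq A' + s * frobSq A - s * (1 - s) * frobSq (A - A') := by
    rw [frobSq_sub_comm A A']
    exact frobSq_segment _ _ _ _ rfl
  unfold QtilA
  simp only [frobSq_sub_comm _ prevM, key, keyA]
  split_ifs <;> ring

lemma sum_sub_sum_of_eq_off (S : Finset ℕ) (f g : ℕ → ℝ) (t : ℕ) (ht : t ∈ S)
    (h : ∀ s ∈ S, s ≠ t → f s = g s) :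
    ∑ s ∈ S, f s - ∑ s ∈ S, g s = f t - g t := by
  rw [← Finset.sum_sub_distrib]
  refine Finset.sum_eq_single_of_mem t ht fun s hs hst => ?_
  rw [h s hs hst, sub_self]

/-- Changing a path `M` at time `t` only affects the two increments adjacent to `t`. -/
lemma smooth_diff {a b : ℕ} (T t : ℕ) (ht1 : 1 ≤ t) (htT : t ≤ T)
    (M M' : ℕ → Matrix (Fin a) (Fin b) ℝ) (h : ∀ s, s ≠ t → M s = M' s) :
    ∑ s ∈ Finset.Icc 2 T, frobSq (M s - M (s - 1))
        - ∑ s ∈ Finset.Icc 2 T, frobSq (M' s - M' (s - 1))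
      = (if 1 < t then frobSq (M t - M' (t - 1)) - frobSq (M' t - M' (t - 1)) else 0)
        + (if t < T then frobSq (M (t + 1) - M t) - frobSq (M (t + 1) - M' t) else 0) := by
  rw [← Finset.sum_sub_distrib]
  have hterm : ∀ s ∈ Finset.Icc 2 T,
      frobSq (M s - M (s - 1)) - frobSq (M' s - M' (s - 1))
        = (if s = t then frobSq (M t - M' (t - 1)) - frobSq (M' t - M' (t - 1)) else 0)
          + (if s = t + 1 then frobSq (M (t + 1) - M t) - frobSq (M (t + 1) - M' t) else 0) := by
    intro s hs
    have hs2 := (Finset.mem_Icc.mp hs).1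
    by_cases h1 : s = t
    · subst h1
      rw [h (s - 1) (by omega)]
      simp
    · by_cases h2 : s = t + 1
      · subst h2
        rw [← h (t + 1) (by omega)]
        simp
      · rw [h s h1, h (s - 1) (by omega)]
        simp [h1, h2]
  rw [Finset.sum_congr rfl hterm, Finset.sum_add_distrib, Finset.sum_ite_eq', Finset.sum_ite_eq']
  have e1 : t ∈ Finset.Icc 2 T ↔ 1 < t := by rw [Finset.mem_Icc]; omega
  have e2 : t + 1 ∈ Finset.Icc 2 T ↔ t < T := by rw [Finset.mem_Icc]; omega
  simp only [e1, e2]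

/-- Majorization-minimization step: if two tuples differ only at time `t`, the decrease of the
objective is at least the decrease of the surrogate built at the first tuple. -/
lemma QtilA_diff_le_objF_diff {m n r : ℕ} (T : ℕ) (l1 l2 l3 : ℝ)
    (Ωs : ℕ → Finset (Fin m × Fin n)) (Xs Ys : ℕ → Matrix (Fin m) (Fin n) ℝ)
    (A A' : ℕ → Matrix (Fin m) (Fin r) ℝ) (B : ℕ → Matrix (Fin n) (Fin r) ℝ)
    (t : ℕ) (ht : t ∈ Finset.Icc 1 T) (h : ∀ s, s ≠ t → A s = A' s) :
    QtilA T l1 l2 l3 (Ωs t) (Xs t) (Ys t) (A t) (B t)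
          (A' (t - 1) * (B (t - 1))ᵀ) (A (t + 1) * (B (t + 1))ᵀ) t (A t)
        - QtilA T l1 l2 l3 (Ωs t) (Xs t) (Ys t) (A t) (B t)
          (A' (t - 1) * (B (t - 1))ᵀ) (A (t + 1) * (B (t + 1))ᵀ) t (A' t)
      ≤ objF T l1 l2 l3 Ωs Xs Ys A B - objF T l1 l2 l3 Ωs Xs Ys A' B := by
  have d1 := sum_sub_sum_of_eq_off (Finset.Icc 1 T)
    (fun s => frobSq (proj (Ωs s) (Xs s - A s * (B s)ᵀ)))
    (fun s => frobSq (proj (Ωs s) (Xs s - A' s * (B s)ᵀ))) t ht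
    (fun s _ hs => by simp only [h s hs])
  have d2 := sum_sub_sum_of_eq_off (Finset.Icc 1 T)
    (fun s => frobSq (A s) + frobSq (B s))
    (fun s => frobSq (A' s) + frobSq (B s)) t ht
    (fun s _ hs => by simp only [h s hs])
  have d3 := sum_sub_sum_of_eq_off (Finset.Icc 1 T)
    (fun s => frobSq (Ys s - A s * (B s)ᵀ))
    (fun s => frobSq (Ys s - A' s * (B s)ᵀ)) t ht
    (fun s _ hs => by simp only [h s hs])
  have ht' := Finset.mem_Icc.mp ht
  have d4 := smooth_diff T t ht'.1 ht'.2 (fun s => A s * (B s)ᵀ) (fun s => A' s * (B s)ᵀ)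
    (fun s hs => by simp only [h s hs])
  have hfill := frobSq_proj_le (Ωs t) (Xs t) (A t * (B t)ᵀ) (A' t * (B t)ᵀ)
  have hself := frobSq_proj_self (Ωs t) (Xs t) (A t * (B t)ᵀ)
  have d4' := congrArg (fun x => l2 / 2 * x) d4
  have d2' := congrArg (fun x => l1 / 2 * x) d2
  have d3' := congrArg (fun x => l3 / 2 * x) d3
  beta_reduce at d1 d2' d3' d4'
  unfold QtilA objF
  split_ifs at d4' ⊢ <;> linarith

/-- per-update descent bound for the A-step: along the VISTA iterates,
`Δ^A_{k,t} = F(A_{1:t−1}^{(k+1)}, A_{t:T}^{(k)}, B_{1:T}^{(k)}) −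
F(A_{1:t}^{(k+1)}, A_{t+1:T}^{(k)}, B_{1:T}^{(k)})` is bounded below by
`((1+λ2(1{t>1}+1{t<T})+λ3)/2)‖(A_t^{(k)}−A_t^{(k+1)})(B_t^{(k)})ᵀ‖_F²
  + (λ1/2)‖A_t^{(k)}−A_t^{(k+1)}‖_F²`. -/
theorem stmt7 (m n r T : ℕ) (hm : 0 < m) (hn : 0 < n) (hr : 0 < r) (hT : 0 < T)
    (l1 l2 l3 : ℝ) (hl1 : 0 ≤ l1) (hl2 : 0 ≤ l2) (hl3 : 0 ≤ l3)
    (Ωs : ℕ → Finset (Fin m × Fin n))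
    (Xs Ys : ℕ → Matrix (Fin m) (Fin n) ℝ)
    (AA : ℕ → ℕ → Matrix (Fin m) (Fin r) ℝ)
    (BB : ℕ → ℕ → Matrix (Fin n) (Fin r) ℝ)
    (hA : ∀ k, 1 ≤ k → ∀ t ∈ Finset.Icc 1 T, ∀ A : Matrix (Fin m) (Fin r) ℝ,
      QtilA T l1 l2 l3 (Ωs t) (Xs t) (Ys t) (AA k t) (BB k t)
          (AA (k + 1) (t - 1) * (BB k (t - 1))ᵀ) (AA k (t + 1) * (BB k (t + 1))ᵀ) t
          (AA (k + 1) t)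
        ≤ QtilA T l1 l2 l3 (Ωs t) (Xs t) (Ys t) (AA k t) (BB k t)
          (AA (k + 1) (t - 1) * (BB k (t - 1))ᵀ) (AA k (t + 1) * (BB k (t + 1))ᵀ) t A)
    : ∀ k, 1 ≤ k → ∀ t ∈ Finset.Icc 1 T,
      ((1 + l2 * ((if 1 < t then (1 : ℝ) else 0) + (if t < T then (1 : ℝ) else 0)) + l3) / 2)
            * frobSq ((AA k t - AA (k + 1) t) * (BB k t)ᵀ)
          + (l1 / 2) * frobSq (AA k t - AA (k + 1) t)
        ≤ objF T l1 l2 l3 Ωs Xs Ys (fun s => if s < t then AA (k + 1) s else AA k s) (BB k)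
          - objF T l1 l2 l3 Ωs Xs Ys
              (fun s => if s < t + 1 then AA (k + 1) s else AA k s) (BB k) := by
  intro k hk t ht
  set A : ℕ → Matrix (Fin m) (Fin r) ℝ := fun s => if s < t then AA (k + 1) s else AA k s with hAd
  set A' : ℕ → Matrix (Fin m) (Fin r) ℝ :=
    fun s => if s < t + 1 then AA (k + 1) s else AA k s with hAd'
  have hoff : ∀ s, s ≠ t → A s = A' s := by
    intro s hs
    have : s < t ↔ s < t + 1 := by omega
    simp only [hAd, hAd', this]
  have hdesc := QtilA_diff_le_objF_diff T l1 l2 l3 Ωs Xs Ys A A' (BB k) t ht hoff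
  have e1 : A t = AA k t := by simp [hAd]
  have e2 : A' t = AA (k + 1) t := by simp [hAd']
  have e3 : A (t + 1) = AA k (t + 1) := by simp [hAd]
  have e4 : A' (t - 1) = AA (k + 1) (t - 1) := by
    simp [hAd']
  rw [e1, e2, e3, e4] at hdesc
  refine le_trans (le_of_forall_one_sub_mul_le fun s hs _ => ?_) hdesc
  have hmin := hA k hk t ht ((1 - s) • AA (k + 1) t + s • AA k t)
  rw [QtilA_segment] at hmin
  refine le_of_mul_le_mul_left ?_ hs
  linarith
end

section
/- Monotone convergence of the objective: along the VISTA iterates, the sequence of objective values F(A_{1:T}^{(k)}, B_{1:T}^{(k)}) is non-increasing in k and bounded below by 0; consequently it converges to a finite limit f^∞ ≥ 0. -/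
/-!
Write `P t` for the products before a half-sweep (over all `A_t`, or over all `B_t`) and `N t` for
those after it.  Filling in the unobserved entries from `P t` majorizes the observed loss: the
filled-in loss dominates `‖P_Ω(X - M)‖²` for every `M`, with equality at `M = P t`
(`frobSq_proj_le_fill`, `frobSq_fill_self`).  So minimality of the new factor, compared with the old
one, gives for each `t` an inequality that mixes `N (t-1)`, `N t`, `P t` and `P (t+1)`.  Summed over
`t`, the mixed terms `‖P (t+1) - N t‖²` for `t < T` on the left are the terms `‖P t - N (t-1)‖²` for
`t > 1` on the right; they cancel, and what is left is the descent of the objective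
(`halfSweep_descent`).  Two half-sweeps give monotonicity, and a non-increasing sequence bounded
below by `0` converges.
-/

open Matrix BigOperators Finset Filter Topology

/-- The surrogate `Q̃_{B,t}(B)`.  Here `At` is the already-updated `A_t^{(k+1)}`, `Bkt` the
current `B_t^{(k)}` (used to form `X_t^{(k+1/2)} = P_{Ω_t}(X_t) + P_{Ω_t^⊥}(A_t^{(k+1)}(B_t^{(k)})ᵀ)`),
and `prevM, nextM` are `A_{t−1}^{(k+1)}(B_{t−1}^{(k+1)})ᵀ` and `A_{t+1}^{(k+1)}(B_{t+1}^{(k)})ᵀ`. -/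
noncomputable def QtilB {m n r : ℕ} (T : ℕ) (l1 l2 l3 : ℝ)
    (Ωt : Finset (Fin m × Fin n)) (Xt Yt : Matrix (Fin m) (Fin n) ℝ)
    (At : Matrix (Fin m) (Fin r) ℝ) (Bkt : Matrix (Fin n) (Fin r) ℝ)
    (prevM nextM : Matrix (Fin m) (Fin n) ℝ) (t : ℕ)
    (B : Matrix (Fin n) (Fin r) ℝ) : ℝ :=
  (1 / 2) * frobSq (proj Ωt Xt + projPerp Ωt (At * Bktᵀ) - At * Bᵀ)
    + (l1 / 2) * frobSq B
    + (l3 / 2) * frobSq (Yt - At * Bᵀ)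
    + (l2 / 2) * (if 1 < t then frobSq (At * Bᵀ - prevM) else 0)
    + (l2 / 2) * (if t < T then frobSq (nextM - At * Bᵀ) else 0)

lemma frobSq_nonneg {a b : ℕ} (M : Matrix (Fin a) (Fin b) ℝ) : 0 ≤ frobSq M :=
  Finset.sum_nonneg fun _ _ => Finset.sum_nonneg fun _ _ => sq_nonneg _

/-- Majorization: filling in the unobserved entries can only increase the loss. -/
lemma frobSq_proj_le_fill {a b : ℕ} (Ω : Finset (Fin a × Fin b))
    (X P M : Matrix (Fin a) (Fin b) ℝ) :
    frobSq (proj Ω (X - M)) ≤ frobSq (proj Ω X + projPerp Ω P - M) := by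
  unfold frobSq
  refine Finset.sum_le_sum fun i _ => Finset.sum_le_sum fun j _ => ?_
  by_cases h : (i, j) ∈ Ω
  · simp [proj, projPerp, h]
  · simp [proj, projPerp, h, sq_nonneg]

/-- The majorization is tight at the matrix used for the fill-in. -/
lemma frobSq_fill_self {a b : ℕ} (Ω : Finset (Fin a × Fin b))
    (X P : Matrix (Fin a) (Fin b) ℝ) :
    frobSq (proj Ω X + projPerp Ω P - P) = frobSq (proj Ω (X - P)) := by
  unfold frobSq
  refine Finset.sum_congr rfl fun i _ => Finset.sum_congr rfl fun j _ => ?_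
  by_cases h : (i, j) ∈ Ω
  · simp [proj, projPerp, h]
  · simp [proj, projPerp, h]

lemma sum_Icc_ite_one_lt (T : ℕ) (f : ℕ → ℝ) :
    ∑ t ∈ Finset.Icc 1 T, (if 1 < t then f t else 0) = ∑ t ∈ Finset.Icc 2 T, f t := by
  rw [← Finset.sum_filter]
  refine Finset.sum_congr ?_ fun _ _ => rfl
  ext t
  simp only [Finset.mem_filter, Finset.mem_Icc]
  omega

lemma sum_Icc_ite_lt (T : ℕ) (f : ℕ → ℝ) :
    ∑ t ∈ Finset.Icc 1 T, (if t < T then f (t + 1) else 0) = ∑ t ∈ Finset.Icc 2 T, f t := by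
  rw [← Finset.sum_filter]
  refine Finset.sum_nbij' (fun t => t + 1) (fun t => t - 1) ?_ ?_ ?_ ?_ fun _ _ => rfl
  all_goals
    intro t ht
    simp only [Finset.mem_filter, Finset.mem_Icc] at ht ⊢
    omega

/-- The objective as a function of the products `M t = A t * (B t)ᵀ` and of the ridge terms
`c t = ‖A t‖² + ‖B t‖²`. -/
noncomputable def prodObj {m n : ℕ} (T : ℕ) (l1 l2 l3 : ℝ)
    (Ωs : ℕ → Finset (Fin m × Fin n)) (Xs Ys M : ℕ → Matrix (Fin m) (Fin n) ℝ)
    (c : ℕ → ℝ) : ℝ :=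
  (1 / 2) * ∑ t ∈ Finset.Icc 1 T, frobSq (proj (Ωs t) (Xs t - M t))
    + (l1 / 2) * ∑ t ∈ Finset.Icc 1 T, c t
    + (l2 / 2) * ∑ t ∈ Finset.Icc 2 T, frobSq (M t - M (t - 1))
    + (l3 / 2) * ∑ t ∈ Finset.Icc 1 T, frobSq (Ys t - M t)

/-- Descent over one half-sweep: `P`, `c` are the products and ridge terms before it, `N`, `d` those
after it, and `h` is the comparison of the surrogate at the new and at the old factor. -/
lemma halfSweep_descent {m n : ℕ} (T : ℕ) (l1 l2 l3 : ℝ)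
    (Ωs : ℕ → Finset (Fin m × Fin n)) (Xs Ys P N : ℕ → Matrix (Fin m) (Fin n) ℝ)
    (c d : ℕ → ℝ)
    (h : ∀ t ∈ Finset.Icc 1 T,
      (1 / 2) * frobSq (proj (Ωs t) (Xs t) + projPerp (Ωs t) (P t) - N t)
        + (l1 / 2) * d t
        + (l3 / 2) * frobSq (Ys t - N t)
        + (l2 / 2) * (if 1 < t then frobSq (N t - N (t - 1)) else 0)
        + (l2 / 2) * (if t < T then frobSq (P (t + 1) - N t) else 0)
      ≤ (1 / 2) * frobSq (proj (Ωs t) (Xs t) + projPerp (Ωs t) (P t) - P t)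
        + (l1 / 2) * c t
        + (l3 / 2) * frobSq (Ys t - P t)
        + (l2 / 2) * (if 1 < t then frobSq (P t - N (t - 1)) else 0)
        + (l2 / 2) * (if t < T then frobSq (P (t + 1) - P t) else 0)) :
    prodObj T l1 l2 l3 Ωs Xs Ys N d ≤ prodObj T l1 l2 l3 Ωs Xs Ys P c := by
  have hs := Finset.sum_le_sum h
  simp only [Finset.sum_add_distrib, ← Finset.mul_sum, frobSq_fill_self] at hs
  have hmaj : ∑ t ∈ Finset.Icc 1 T, frobSq (proj (Ωs t) (Xs t - N t))
      ≤ ∑ t ∈ Finset.Icc 1 T,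
          frobSq (proj (Ωs t) (Xs t) + projPerp (Ωs t) (P t) - N t) :=
    Finset.sum_le_sum fun t _ => frobSq_proj_le_fill _ _ _ _
  have e1 := sum_Icc_ite_one_lt T fun t => frobSq (N t - N (t - 1))
  have e2 := sum_Icc_ite_one_lt T fun t => frobSq (P t - N (t - 1))
  have e3 := sum_Icc_ite_lt T fun t => frobSq (P t - N (t - 1))
  have e4 := sum_Icc_ite_lt T fun t => frobSq (P t - P (t - 1))
  simp only [Nat.add_sub_cancel] at e3 e4
  rw [e1, e2, e3, e4] at hs
  unfold prodObj
  linarith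

lemma objF_nonneg {m n r : ℕ} (T : ℕ) {l1 l2 l3 : ℝ} (hl1 : 0 ≤ l1) (hl2 : 0 ≤ l2)
    (hl3 : 0 ≤ l3) (Ωs : ℕ → Finset (Fin m × Fin n)) (Xs Ys : ℕ → Matrix (Fin m) (Fin n) ℝ)
    (A : ℕ → Matrix (Fin m) (Fin r) ℝ) (B : ℕ → Matrix (Fin n) (Fin r) ℝ) :
    0 ≤ objF T l1 l2 l3 Ωs Xs Ys A B := by
  have hsum : ∀ (s : Finset ℕ) (f : ℕ → ℝ), (∀ t, 0 ≤ f t) → 0 ≤ ∑ t ∈ s, f t :=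
    fun s f hf => Finset.sum_nonneg fun t _ => hf t
  have h1 := hsum (Finset.Icc 1 T) _ fun t => frobSq_nonneg (proj (Ωs t) (Xs t - A t * (B t)ᵀ))
  have h2 := hsum (Finset.Icc 1 T) _ fun t =>
    add_nonneg (frobSq_nonneg (A t)) (frobSq_nonneg (B t))
  have h3 := hsum (Finset.Icc 2 T) _ fun t =>
    frobSq_nonneg (A t * (B t)ᵀ - A (t - 1) * (B (t - 1))ᵀ)
  have h4 := hsum (Finset.Icc 1 T) _ fun t => frobSq_nonneg (Ys t - A t * (B t)ᵀ)
  unfold objF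
  positivity

/-- monotone convergence of the objective: along the VISTA iterates the
objective values are non-increasing in `k`, bounded below by `0`, and converge to a
finite limit `f^∞ ≥ 0`. -/
theorem stmt10 (m n r T : ℕ) (hm : 0 < m) (hn : 0 < n) (hr : 0 < r) (hT : 0 < T)
    (l1 l2 l3 : ℝ) (hl1 : 0 ≤ l1) (hl2 : 0 ≤ l2) (hl3 : 0 ≤ l3)
    (Ωs : ℕ → Finset (Fin m × Fin n))
    (Xs Ys : ℕ → Matrix (Fin m) (Fin n) ℝ)
    (AA : ℕ → ℕ → Matrix (Fin m) (Fin r) ℝ)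
    (BB : ℕ → ℕ → Matrix (Fin n) (Fin r) ℝ)
    (hA : ∀ k, 1 ≤ k → ∀ t ∈ Finset.Icc 1 T, ∀ A : Matrix (Fin m) (Fin r) ℝ,
      QtilA T l1 l2 l3 (Ωs t) (Xs t) (Ys t) (AA k t) (BB k t)
          (AA (k + 1) (t - 1) * (BB k (t - 1))ᵀ) (AA k (t + 1) * (BB k (t + 1))ᵀ) t
          (AA (k + 1) t)
        ≤ QtilA T l1 l2 l3 (Ωs t) (Xs t) (Ys t) (AA k t) (BB k t)
          (AA (k + 1) (t - 1) * (BB k (t - 1))ᵀ) (AA k (t + 1) * (BB k (t + 1))ᵀ) t A)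
    (hB : ∀ k, 1 ≤ k → ∀ t ∈ Finset.Icc 1 T, ∀ B : Matrix (Fin n) (Fin r) ℝ,
      QtilB T l1 l2 l3 (Ωs t) (Xs t) (Ys t) (AA (k + 1) t) (BB k t)
          (AA (k + 1) (t - 1) * (BB (k + 1) (t - 1))ᵀ)
          (AA (k + 1) (t + 1) * (BB k (t + 1))ᵀ) t (BB (k + 1) t)
        ≤ QtilB T l1 l2 l3 (Ωs t) (Xs t) (Ys t) (AA (k + 1) t) (BB k t)
          (AA (k + 1) (t - 1) * (BB (k + 1) (t - 1))ᵀ)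
          (AA (k + 1) (t + 1) * (BB k (t + 1))ᵀ) t B)
    : (∀ k, 1 ≤ k →
        objF T l1 l2 l3 Ωs Xs Ys (AA (k + 1)) (BB (k + 1))
          ≤ objF T l1 l2 l3 Ωs Xs Ys (AA k) (BB k)) ∧
      (∀ k, 1 ≤ k → 0 ≤ objF T l1 l2 l3 Ωs Xs Ys (AA k) (BB k)) ∧
      ∃ finf : ℝ, 0 ≤ finf ∧
        Filter.Tendsto (fun k => objF T l1 l2 l3 Ωs Xs Ys (AA k) (BB k))
          Filter.atTop (nhds finf) := by
  have hmono : ∀ k, 1 ≤ k → objF T l1 l2 l3 Ωs Xs Ys (AA (k + 1)) (BB (k + 1))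
      ≤ objF T l1 l2 l3 Ωs Xs Ys (AA k) (BB k) := by
    intro k hk
    have stepA : objF T l1 l2 l3 Ωs Xs Ys (AA (k + 1)) (BB k)
        ≤ objF T l1 l2 l3 Ωs Xs Ys (AA k) (BB k) := by
      refine halfSweep_descent T l1 l2 l3 Ωs Xs Ys
        (fun t => AA k t * (BB k t)ᵀ) (fun t => AA (k + 1) t * (BB k t)ᵀ)
        (fun t => frobSq (AA k t) + frobSq (BB k t))
        (fun t => frobSq (AA (k + 1) t) + frobSq (BB k t)) fun t ht => ?_
      have := hA k hk t ht (AA k t)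
      unfold QtilA at this
      linarith
    have stepB : objF T l1 l2 l3 Ωs Xs Ys (AA (k + 1)) (BB (k + 1))
        ≤ objF T l1 l2 l3 Ωs Xs Ys (AA (k + 1)) (BB k) := by
      refine halfSweep_descent T l1 l2 l3 Ωs Xs Ys
        (fun t => AA (k + 1) t * (BB k t)ᵀ) (fun t => AA (k + 1) t * (BB (k + 1) t)ᵀ)
        (fun t => frobSq (AA (k + 1) t) + frobSq (BB k t))
        (fun t => frobSq (AA (k + 1) t) + frobSq (BB (k + 1) t)) fun t ht => ?_
      have := hB k hk t ht (BB k t)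
      unfold QtilB at this
      linarith
    exact stepB.trans stepA
  have hnonneg : ∀ k, 0 ≤ objF T l1 l2 l3 Ωs Xs Ys (AA k) (BB k) :=
    fun k => objF_nonneg T hl1 hl2 hl3 Ωs Xs Ys (AA k) (BB k)
  refine ⟨hmono, fun k _ => hnonneg k, ?_⟩
  -- Monotonicity holds only from `k = 1` on, so the limit is taken along the shifted sequence.
  have hanti : Antitone fun k => objF T l1 l2 l3 Ωs Xs Ys (AA (k + 1)) (BB (k + 1)) :=
    antitone_nat_of_succ_le fun k => hmono (k + 1) (Nat.le_add_left 1 k)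
  have hbdd : BddBelow
      (Set.range fun k => objF T l1 l2 l3 Ωs Xs Ys (AA (k + 1)) (BB (k + 1))) :=
    ⟨0, by rintro _ ⟨k, rfl⟩; exact hnonneg (k + 1)⟩
  have hlim := (Filter.tendsto_add_atTop_iff_nat
    (f := fun k => objF T l1 l2 l3 Ωs Xs Ys (AA k) (BB k)) 1).1 (tendsto_atTop_ciInf hanti hbdd)
  exact ⟨_, ge_of_tendsto' hlim hnonneg, hlim⟩
end
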